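/- Every finite-dimensional simple module over the Lie algebra 𝓛₊ = ⊕_{j≥0} ℂ[x]_{j+1}∂_μ is one-dimensional, and the one-dimensional representations are exactly the maps ρ_α (α ∈ ℂ) given by ρ_α(xᵢ∂_μ) = αμᵢ for i = 1,...,n and ρ_α(𝓛_j) = 0 for j ≥ 1. -/

import Mathlib

open MvPolynomial

/-- The derivation `∂_μ = μ₁∂/∂x₁ + ⋯ + μₙ∂/∂xₙ` applied to a polynomial. -/
noncomputable def dmu (n : ℕ) (μ : Fin n → ℂ) (g : MvPolynomial (Fin n) ℂ) :
    MvPolynomial (Fin n) ℂ :=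
  ∑ i, C (μ i) * pderiv i g

/-- The Lie bracket of `𝓛 = ℂ[x₁,…,xₙ]∂_μ`, identified with `ℂ[x₁,…,xₙ]` via
`f ↔ f∂_μ`; the subalgebra `𝓛₊` corresponds to polynomials with zero constant
term. -/
noncomputable def lbr (n : ℕ) (μ : Fin n → ℂ) (f g : MvPolynomial (Fin n) ℂ) :
    MvPolynomial (Fin n) ℂ :=
  f * dmu n μ g - g * dmu n μ f

attribute [local instance] LieRing.ofAssociativeRing

/-- `∂_μ` as a bundled derivation. -/
noncomputable def dmuD (n : ℕ) (μ : Fin n → ℂ) :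
    Derivation ℂ (MvPolynomial (Fin n) ℂ) (MvPolynomial (Fin n) ℂ) :=
  ∑ i, μ i • pderiv i

lemma dmu_eq (n : ℕ) (μ : Fin n → ℂ) (g : MvPolynomial (Fin n) ℂ) :
    dmu n μ g = dmuD n μ g := by
  have : dmuD n μ g = ∑ i, μ i • pderiv i g := by
    unfold dmuD
    rw [← Derivation.coeFnAddMonoidHom_apply, map_sum]
    simp [Derivation.coeFnAddMonoidHom]
  rw [this]
  simp [dmu, smul_eq_C_mul]

lemma lbr_eq (n : ℕ) (μ : Fin n → ℂ) (f g : MvPolynomial (Fin n) ℂ) :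
    lbr n μ f g = f * dmuD n μ g - g * dmuD n μ f := by
  simp [lbr, dmu_eq]

lemma dmuD_X (n : ℕ) (μ : Fin n → ℂ) (i : Fin n) : dmuD n μ (X i) = C (μ i) := by
  rw [← dmu_eq]
  simp [dmu, pderiv_X, Pi.single_apply]

lemma dmuD_mul (n : ℕ) (μ : Fin n → ℂ) (f g : MvPolynomial (Fin n) ℂ) :
    dmuD n μ (f * g) = f * dmuD n μ g + g * dmuD n μ f := by
  simp

/-- The augmentation ideal. -/
noncomputable abbrev mm (n : ℕ) : Ideal (MvPolynomial (Fin n) ℂ) :=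
  RingHom.ker (constantCoeff (σ := Fin n) (R := ℂ))

lemma mem_mm {n : ℕ} {f : MvPolynomial (Fin n) ℂ} : f ∈ mm n ↔ constantCoeff f = 0 :=
  Iff.rfl

lemma mm_eq (n : ℕ) : mm n = idealOfVars (Fin n) ℂ := by
  ext f
  have := mem_pow_idealOfVars_iff' (σ := Fin n) (R := ℂ) 1 f
  rw [pow_one] at this
  rw [this, mem_mm, constantCoeff_eq]
  constructor
  · intro h x hx
    have : x = 0 := by
      rw [← Finsupp.degree_eq_zero_iff]; omega
    rw [this, h]
  · intro h
    exact h 0 (by simp)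

lemma mem_mm_sq {n : ℕ} {f : MvPolynomial (Fin n) ℂ} (h0 : constantCoeff f = 0)
    (h1 : ∀ i : Fin n, coeff (Finsupp.single i 1) f = 0) : f ∈ mm n ^ 2 := by
  rw [mm_eq, mem_pow_idealOfVars_iff']
  intro x hx
  rcases Nat.lt_or_ge x.degree 1 with h | h
  · have : x = 0 := by
      rw [← Finsupp.degree_eq_zero_iff]; omega
    rw [this, ← h0, constantCoeff_eq]
  · have h' : x.degree = 1 := by omega
    obtain ⟨i, rfl⟩ : ∃ i, x = Finsupp.single i 1 := by
      have hx0 : x ≠ 0 := by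
        rintro rfl
        simp at h'
      obtain ⟨i, hi⟩ := Finsupp.ne_iff.1 hx0
      have hle : Finsupp.single i 1 ≤ x := by
        rw [Finsupp.single_le_iff]
        exact Nat.one_le_iff_ne_zero.2 hi
      obtain ⟨c, rfl⟩ := le_iff_exists_add.1 hle
      have hc : c.degree = 0 := by
        rw [map_add, Finsupp.degree_single] at h'
        omega
      rw [Finsupp.degree_eq_zero_iff] at hc
      exact ⟨i, by rw [hc, add_zero]⟩
    exact h1 i

lemma cc_dmuD (n : ℕ) (μ : Fin n → ℂ) (g : MvPolynomial (Fin n) ℂ) :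
    constantCoeff (dmuD n μ g) = ∑ i, μ i * coeff (Finsupp.single i 1) g := by
  rw [← dmu_eq, dmu, map_sum]
  refine Finset.sum_congr rfl fun i _ => ?_
  rw [map_mul, constantCoeff_C, constantCoeff_eq, coeff_pderiv]
  simp

lemma dmuD_mem (n : ℕ) (μ : Fin n → ℂ) (k : ℕ) (f : MvPolynomial (Fin n) ℂ)
    (hf : f ∈ mm n ^ (k + 1)) : dmuD n μ f ∈ mm n ^ k := by
  induction k generalizing f with
  | zero => simp
  | succ k ih =>
    rw [pow_succ] at hf
    refine Submodule.mul_induction_on hf (fun a ha b hb => ?_) (fun a b ha hb => ?_)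
    · rw [dmuD_mul]
      refine add_mem (Ideal.mul_mem_right _ _ ha) ?_
      rw [pow_succ, mul_comm b]
      exact Ideal.mul_mem_mul (ih a ha) hb
    · rw [map_add]; exact add_mem ha hb

lemma mul_dmuD_mem (n : ℕ) (μ : Fin n → ℂ) (k : ℕ) (f g : MvPolynomial (Fin n) ℂ)
    (hf : f ∈ mm n ^ k) (hg : g ∈ mm n) : g * dmuD n μ f ∈ mm n ^ k := by
  cases k with
  | zero => simp
  | succ k =>
    rw [pow_succ, mul_comm g]
    exact Ideal.mul_mem_mul (dmuD_mem n μ k f hf) hg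

lemma cc_dmuD_lbr (n : ℕ) (μ : Fin n → ℂ) (f g : MvPolynomial (Fin n) ℂ)
    (hf : constantCoeff f = 0) (hg : constantCoeff g = 0) :
    constantCoeff (dmuD n μ (lbr n μ f g)) = 0 := by
  rw [lbr_eq, map_sub, dmuD_mul, dmuD_mul]
  simp only [map_sub, map_add, map_mul, hf, hg]
  ring

/-- The solvable filtration. -/
noncomputable def GG (n : ℕ) (μ : Fin n → ℂ) : ℕ → Submodule ℂ (MvPolynomial (Fin n) ℂ)
  | 0 => (mm n).restrictScalars ℂ
  | 1 => (mm n).restrictScalars ℂ ⊓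
      ((mm n).restrictScalars ℂ).comap (dmuD n μ : _ →ₗ[ℂ] MvPolynomial (Fin n) ℂ)
  | (k + 2) => (mm n ^ (k + 2)).restrictScalars ℂ

lemma lbr_mem (n : ℕ) (μ : Fin n → ℂ) (f g : MvPolynomial (Fin n) ℂ)
    (hf : f ∈ mm n) (hg : g ∈ mm n) : lbr n μ f g ∈ mm n := by
  rw [lbr_eq]
  exact sub_mem (Ideal.mul_mem_right _ _ hf) (Ideal.mul_mem_right _ _ hg)

lemma GG_lbr (n : ℕ) (μ : Fin n → ℂ) (k : ℕ) (f g : MvPolynomial (Fin n) ℂ)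
    (hf : f ∈ GG n μ k) (hg : g ∈ GG n μ k) : lbr n μ f g ∈ GG n μ (k + 1) := by
  match k with
  | 0 =>
    exact ⟨lbr_mem n μ f g hf hg, cc_dmuD_lbr n μ f g hf hg⟩
  | 1 =>
    change lbr n μ f g ∈ mm n ^ 2
    rw [lbr_eq, pow_two]
    exact sub_mem (Ideal.mul_mem_mul hf.1 hg.2) (Ideal.mul_mem_mul hg.1 hf.2)
  | k + 2 =>
    have key : ∀ f g, f ∈ mm n ^ (k + 2) → g ∈ mm n ^ (k + 2) →
        f * dmuD n μ g ∈ mm n ^ (k + 3) := by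
      intro f g hf hg
      have := Ideal.mul_mem_mul hf (dmuD_mem n μ (k + 1) g hg)
      rw [← pow_add] at this
      exact Ideal.pow_le_pow_right (by omega) this
    change lbr n μ f g ∈ mm n ^ (k + 3)
    rw [lbr_eq]
    exact sub_mem (key f g hf hg) (key g f hg hf)

lemma GG_le (n : ℕ) (μ : Fin n → ℂ) (k : ℕ) (f : MvPolynomial (Fin n) ℂ)
    (hf : f ∈ GG n μ k) : f ∈ mm n := by
  match k with
  | 0 => exact hf
  | 1 => exact hf.1
  | k + 2 => exact Ideal.pow_le_self (by omega) hf

section rep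

variable {n : ℕ} {μ : Fin n → ℂ} {U : Type} [AddCommGroup U] [Module ℂ U]

/-- All large powers of `h` act by zero. -/
lemma exists_pow_zero [FiniteDimensional ℂ U]
    (ρ : MvPolynomial (Fin n) ℂ →ₗ[ℂ] Module.End ℂ U)
    (hρ : ∀ f g : MvPolynomial (Fin n) ℂ, constantCoeff f = 0 → constantCoeff g = 0 →
        ρ (lbr n μ f g) = ρ f * ρ g - ρ g * ρ f)
    (h : MvPolynomial (Fin n) ℂ) (h0 : constantCoeff h = 0) (h1 : dmuD n μ h = 1) :
    ∃ N : ℕ, ∀ k, N ≤ k → ρ (h ^ (k + 1)) = 0 := by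
  let T : Module.End ℂ (Module.End ℂ U) :=
    LinearMap.mulLeft ℂ (ρ h) - LinearMap.mulRight ℂ (ρ h)
  have hT : ∀ k : ℕ, T (ρ (h ^ (k + 1))) = (k : ℂ) • ρ (h ^ (k + 1)) := by
    intro k
    have := hρ h (h ^ (k + 1)) h0 (by simp [h0])
    simp only [T, LinearMap.sub_apply, LinearMap.mulLeft_apply, LinearMap.mulRight_apply]
    rw [← this, ← map_smul]
    congr 1
    rw [lbr_eq, Derivation.leibniz_pow, h1]
    simp only [smul_eq_mul, nsmul_eq_mul, Nat.add_sub_cancel, smul_eq_C_mul, map_natCast]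
    push_cast
    ring
  have hfin : Set.Finite {k : ℕ | ρ (h ^ (k + 1)) ≠ 0} := by
    have := T.finite_hasEigenvalue.preimage (f := fun k : ℕ => (k : ℂ))
      Nat.cast_injective.injOn
    refine this.subset ?_
    intro k hk
    exact Module.End.hasEigenvalue_of_hasEigenvector
      ⟨Module.End.mem_eigenspace_iff.2 (hT k), hk⟩
  obtain ⟨M, hM⟩ := hfin.bddAbove
  refine ⟨M + 1, fun k hk => ?_⟩
  by_contra hne
  have := hM hne
  omega

/-- A power of the augmentation ideal acts by zero. -/
lemma exists_mm_pow_zero [FiniteDimensional ℂ U]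
    (ρ : MvPolynomial (Fin n) ℂ →ₗ[ℂ] Module.End ℂ U)
    (hρ : ∀ f g : MvPolynomial (Fin n) ℂ, constantCoeff f = 0 → constantCoeff g = 0 →
        ρ (lbr n μ f g) = ρ f * ρ g - ρ g * ρ f)
    (h : MvPolynomial (Fin n) ℂ) (h0 : constantCoeff h = 0) (h1 : dmuD n μ h = 1) :
    ∃ N : ℕ, ∀ f ∈ mm n ^ N, ρ f = 0 := by
  obtain ⟨N, hN⟩ := exists_pow_zero ρ hρ h h0 h1
  have hJ : ∀ f g, constantCoeff f = 0 → constantCoeff g = 0 → ρ f = 0 →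
      ρ (lbr n μ f g) = 0 := by
    intro f g hf hg h
    rw [hρ f g hf hg, h]; simp
  have step0 : ∀ g ∈ mm n, ρ (h ^ (N + 1) * g) = 0 := by
    intro g hg
    have e1 := hJ (h ^ (N + 2)) g (by simp [h0]) hg (hN (N + 1) (by omega))
    have e2 := hJ (h ^ (N + 1)) (h * g) (by simp [h0]) (by simp [h0]) (hN N le_rfl)
    have e : lbr n μ (h ^ (N + 2)) g - lbr n μ (h ^ (N + 1)) (h * g)
        = (-2 : ℂ) • (h ^ (N + 1) * g) := by
      rw [lbr_eq, lbr_eq, dmuD_mul, Derivation.leibniz_pow, Derivation.leibniz_pow, h1]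
      have e2 : (C (-2 : ℂ) : MvPolynomial (Fin n) ℂ) = -2 := by
        rw [map_neg]; congr 1
      simp only [smul_eq_mul, nsmul_eq_mul, Nat.add_sub_cancel, smul_eq_C_mul, e2,
        show N + 2 - 1 = N + 1 by omega]
      push_cast
      ring
    have e3 := congrArg ρ e
    rw [map_sub, e1, e2, map_smul, sub_zero] at e3
    have := smul_eq_zero.1 e3.symm
    simpa using this
  have main : ∀ j m : ℕ, j + m = N + 2 → ∀ x ∈ mm n ^ j, ρ (x * h ^ m) = 0 := by
    intro j
    induction j with
    | zero =>
      intro m hm x _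
      obtain rfl : m = N + 2 := by omega
      have := step0 (h * x) (by simp [mem_mm, h0])
      rw [← this]; congr 1; ring
    | succ j ih =>
      intro m hm x hx
      have ih := ih (m + 1) (by omega)
      rw [pow_succ] at hx
      refine Submodule.mul_induction_on hx (fun y hy g hg => ?_) (fun a b ha hb => ?_)
      · have e1 := hJ (y * h ^ (m + 1)) g (by simp [h0]) hg (ih y hy)
        have e : lbr n μ (y * h ^ (m + 1)) g = (y * dmuD n μ g) * h ^ (m + 1)
            - (g * dmuD n μ y) * h ^ (m + 1) - ((m + 1 : ℕ) : ℂ) • (y * g * h ^ m) := by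
          rw [lbr_eq, dmuD_mul, Derivation.leibniz_pow, h1]
          simp only [smul_eq_mul, nsmul_eq_mul, Nat.add_sub_cancel, smul_eq_C_mul, map_natCast]
          ring
        rw [e, map_sub, map_sub, ih _ (Ideal.mul_mem_right _ _ hy),
          ih _ (mul_dmuD_mem n μ j y g hy hg), map_smul, sub_zero, zero_sub, neg_eq_zero] at e1
        exact (smul_eq_zero.1 e1).resolve_left (Nat.cast_ne_zero.2 (by omega))
      · rw [add_mul, map_add, ha, hb, add_zero]
  refine ⟨N + 2, fun f hf => ?_⟩
  simpa using main (N + 2) 0 (by omega) f hf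

/-- If all brackets act by zero then so does the square of the augmentation ideal. -/
lemma mm_sq_zero
    (ρ : MvPolynomial (Fin n) ℂ →ₗ[ℂ] Module.End ℂ U)
    (hJ : ∀ f g : MvPolynomial (Fin n) ℂ, constantCoeff f = 0 → constantCoeff g = 0 →
        ρ (lbr n μ f g) = 0)
    (h : MvPolynomial (Fin n) ℂ) (h0 : constantCoeff h = 0) (h1 : dmuD n μ h = 1) :
    ∀ f ∈ mm n ^ 2, ρ f = 0 := by
  have step0 : ∀ g ∈ mm n, ρ (h * g) = 0 := by
    intro g hg
    have e1 := hJ (h ^ 2) g (by simp [h0]) hg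
    have e2 := hJ h (h * g) h0 (by simp [h0])
    have e : lbr n μ (h ^ 2) g - lbr n μ h (h * g) = (-2 : ℂ) • (h * g) := by
      have e2 : (C (-2 : ℂ) : MvPolynomial (Fin n) ℂ) = -2 := by
        rw [map_neg]; congr 1
      rw [lbr_eq, lbr_eq, dmuD_mul, pow_two, dmuD_mul, h1, smul_eq_C_mul, e2]
      ring
    have e3 := congrArg ρ e
    rw [map_sub, e1, e2, map_smul, sub_zero] at e3
    have := smul_eq_zero.1 e3.symm
    simpa using this
  intro f hf
  rw [pow_two] at hf
  refine Submodule.mul_induction_on hf (fun y hy g hg => ?_) (fun a b ha hb => ?_)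
  · have e1 := hJ (h * y) g (by simp [h0]) hg
    have e : lbr n μ (h * y) g = h * (y * dmuD n μ g) - h * (g * dmuD n μ y) - y * g := by
      rw [lbr_eq, dmuD_mul, h1]; ring
    rw [e, map_sub, map_sub, step0 _ (Ideal.mul_mem_right _ _ hy),
      step0 _ (Ideal.mul_mem_right _ _ hg)] at e1
    simpa using e1
  · rw [map_add, ha, hb, add_zero]

/-- The image Lie algebra. -/
noncomputable def imLie
    (ρ : MvPolynomial (Fin n) ℂ →ₗ[ℂ] Module.End ℂ U)
    (hρ : ∀ f g : MvPolynomial (Fin n) ℂ, constantCoeff f = 0 → constantCoeff g = 0 →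
        ρ (lbr n μ f g) = ρ f * ρ g - ρ g * ρ f) : LieSubalgebra ℂ (Module.End ℂ U) :=
  { ((mm n).restrictScalars ℂ).map ρ with
    lie_mem' := by
      rintro _ _ ⟨f, hf, rfl⟩ ⟨g, hg, rfl⟩
      exact ⟨lbr n μ f g, lbr_mem n μ f g hf hg, hρ f g hf hg⟩ }

lemma imLie_solvable
    (ρ : MvPolynomial (Fin n) ℂ →ₗ[ℂ] Module.End ℂ U)
    (hρ : ∀ f g : MvPolynomial (Fin n) ℂ, constantCoeff f = 0 → constantCoeff g = 0 →
        ρ (lbr n μ f g) = ρ f * ρ g - ρ g * ρ f)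
    (N : ℕ) (hN : ∀ f ∈ mm n ^ N, ρ f = 0) : LieAlgebra.IsSolvable (imLie ρ hρ) := by
  have key : ∀ k, ∀ x ∈ LieAlgebra.derivedSeries ℂ (imLie ρ hρ) k,
      (x : Module.End ℂ U) ∈ (GG n μ k).map ρ := by
    intro k
    induction k with
    | zero => intro x _; exact x.2
    | succ k ih =>
      intro x hx
      rw [LieAlgebra.derivedSeries_def, LieAlgebra.derivedSeriesOfIdeal_succ,
        ← LieAlgebra.derivedSeries_def,
        ← LieSubmodule.mem_toSubmodule, LieSubmodule.lieIdeal_oper_eq_linear_span'] at hx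
      induction hx using Submodule.span_induction with
      | mem x hx =>
        obtain ⟨a, ha, b, hb, rfl⟩ := hx
        obtain ⟨f, hf, hfa⟩ := ih a ha
        obtain ⟨g, hg, hgb⟩ := ih b hb
        refine ⟨lbr n μ f g, GG_lbr n μ k f g hf hg, ?_⟩
        rw [hρ f g (GG_le n μ k f hf) (GG_le n μ k g hg), hfa, hgb]
        rfl
      | zero => exact zero_mem _
      | add x y _ _ hx hy => exact add_mem hx hy
      | smul c x _ hx => exact Submodule.smul_mem _ c hx
  refine LieAlgebra.IsSolvable.mk (R := ℂ) (k := N + 2) ?_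
  rw [eq_bot_iff]
  intro x hx
  obtain ⟨f, hf, hfx⟩ := key _ x hx
  have : ρ f = 0 := hN f (Ideal.pow_le_pow_right (by omega) hf)
  rw [this] at hfx
  rw [LieSubmodule.mem_bot]
  exact Subtype.ext hfx.symm

lemma exists_eigen [FiniteDimensional ℂ U] [Nontrivial U]
    (ρ : MvPolynomial (Fin n) ℂ →ₗ[ℂ] Module.End ℂ U)
    (hρ : ∀ f g : MvPolynomial (Fin n) ℂ, constantCoeff f = 0 → constantCoeff g = 0 →
        ρ (lbr n μ f g) = ρ f * ρ g - ρ g * ρ f)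
    (N : ℕ) (hN : ∀ f ∈ mm n ^ N, ρ f = 0) :
    ∃ v : U, v ≠ 0 ∧ ∀ f, constantCoeff f = 0 → ∃ c : ℂ, ρ f v = c • v := by
  haveI := imLie_solvable ρ hρ N hN
  obtain ⟨χ, hχ⟩ := LieModule.exists_nontrivial_weightSpace_of_isSolvable ℂ (imLie ρ hρ) U
  obtain ⟨⟨v, hv⟩, hv0⟩ := exists_ne (0 : LieModule.weightSpace U χ)
  refine ⟨v, by simpa using hv0, fun f hf => ?_⟩
  rw [LieModule.mem_weightSpace] at hv
  exact ⟨_, hv ⟨ρ f, f, hf, rfl⟩⟩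

end rep

/-- Every finite-dimensional simple module over `𝓛₊` is one-dimensional, and the
one-dimensional representations are exactly the maps `ρ_α` (`α ∈ ℂ`) with
`ρ_α(xᵢ∂_μ) = αμᵢ` and `ρ_α(𝓛_j) = 0` for `j ≥ 1`.  A representation is a linear
map `ρ : 𝓛₊ → End U` turning brackets into commutators (stated for all `f, g`
with zero constant term); simplicity means `U ≠ 0` has no proper nonzero
`ρ(𝓛₊)`-invariant subspaces.  The converse direction asserts that each `ρ_α`,
i.e. `f ↦ α Σᵢ μᵢ·(coefficient of xᵢ in f)`, kills all brackets and hence is a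
one-dimensional representation. -/
theorem stmt15 (n : ℕ) (μ : Fin n → ℂ)
    (hgen : ∀ r : Fin n → ℤ, r ≠ 0 → (∑ i, μ i * (r i : ℂ)) ≠ 0) :
    (∀ (U : Type) (_ : AddCommGroup U) (_ : Module ℂ U) (_ : FiniteDimensional ℂ U)
      (ρ : MvPolynomial (Fin n) ℂ →ₗ[ℂ] Module.End ℂ U),
      (∀ f g : MvPolynomial (Fin n) ℂ, constantCoeff f = 0 → constantCoeff g = 0 →
        ρ (lbr n μ f g) = ρ f * ρ g - ρ g * ρ f) →
      Nontrivial U →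
      (∀ S : Submodule ℂ U,
        (∀ f : MvPolynomial (Fin n) ℂ, constantCoeff f = 0 → ∀ u ∈ S, ρ f u ∈ S) →
        S = ⊥ ∨ S = ⊤) →
      (Module.finrank ℂ U = 1 ∧
        ∃ α : ℂ,
          (∀ i : Fin n, ρ (X i) = (α * μ i) • (1 : Module.End ℂ U)) ∧
          (∀ f : MvPolynomial (Fin n) ℂ, constantCoeff f = 0 →
            (∀ i : Fin n, coeff (Finsupp.single i 1) f = 0) → ρ f = 0))) ∧
    (∀ (_ : ℂ) (f g : MvPolynomial (Fin n) ℂ), constantCoeff f = 0 → constantCoeff g = 0 →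
      ∑ i, μ i * coeff (Finsupp.single i 1) (lbr n μ f g) = 0) := by
  refine ⟨?_, fun _ f g hf hg => by rw [← cc_dmuD]; exact cc_dmuD_lbr n μ f g hf hg⟩
  intro U _ _ _ ρ hρ _ hS
  have hμ : ∀ i, μ i ≠ 0 := by
    intro i
    have := hgen (Pi.single i 1) (by simp)
    simpa [Pi.single_apply] using this
  have hh : (n = 0) ∨ ∃ h : MvPolynomial (Fin n) ℂ, constantCoeff h = 0 ∧ dmuD n μ h = 1 := by
    rcases Nat.eq_zero_or_pos n with h | h
    · exact Or.inl h
    · right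
      let i : Fin n := ⟨0, h⟩
      refine ⟨(μ i)⁻¹ • X i, by simp [smul_eq_C_mul], ?_⟩
      rw [Derivation.map_smul, dmuD_X, smul_eq_C_mul, ← C_mul, inv_mul_cancel₀ (hμ i), C_1]
  have h00 : n = 0 → ∀ f : MvPolynomial (Fin n) ℂ, constantCoeff f = 0 → f = 0 := by
    rintro rfl f hf
    ext m
    rw [Subsingleton.elim m 0, ← constantCoeff_eq, hf]; simp
  obtain ⟨N, hN⟩ : ∃ N : ℕ, ∀ f ∈ mm n ^ N, ρ f = 0 := by
    rcases hh with hn | ⟨h, h0, h1⟩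
    · refine ⟨1, fun f hf => ?_⟩
      rw [pow_one] at hf
      rw [h00 hn f hf, map_zero]
    · exact exists_mm_pow_zero ρ hρ h h0 h1
  obtain ⟨v, hv0, hv⟩ := exists_eigen ρ hρ N hN
  have htop : Submodule.span ℂ {v} = ⊤ := by
    refine (hS (Submodule.span ℂ {v}) ?_).resolve_left ?_
    · intro f hf u hu
      obtain ⟨a, rfl⟩ := Submodule.mem_span_singleton.1 hu
      obtain ⟨c, hc⟩ := hv f hf
      rw [map_smul, hc]
      exact Submodule.smul_mem _ _ (Submodule.smul_mem _ _ (Submodule.mem_span_singleton_self v))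
    · simpa using hv0
  have hsc : ∀ f, constantCoeff f = 0 → ∃ c : ℂ, ρ f = c • (1 : Module.End ℂ U) := by
    intro f hf
    obtain ⟨c, hc⟩ := hv f hf
    refine ⟨c, LinearMap.ext fun u => ?_⟩
    obtain ⟨a, rfl⟩ := Submodule.mem_span_singleton.1 (htop ▸ Submodule.mem_top : u ∈ Submodule.span ℂ {v})
    rw [map_smul, hc]
    simp [smul_comm a c]
  have hJ : ∀ f g : MvPolynomial (Fin n) ℂ, constantCoeff f = 0 → constantCoeff g = 0 →
        ρ (lbr n μ f g) = 0 := by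
    intro f g hf hg
    obtain ⟨a, ha⟩ := hsc f hf
    obtain ⟨b, hb⟩ := hsc g hg
    rw [hρ f g hf hg, ha, hb]
    simp [smul_smul, mul_comm]
  refine ⟨(finrank_eq_one_iff_of_nonzero v hv0).2 htop, ?_⟩
  rcases hh with hn | ⟨h, h0, h1⟩
  · refine ⟨0, fun i => absurd i.2 (by omega), fun f hf _ => by rw [h00 hn f hf, map_zero]⟩
  · obtain ⟨a, ha⟩ := hsc h h0
    refine ⟨a, fun i => ?_, fun f hf hf1 => mm_sq_zero ρ hJ h h0 h1 f (mem_mm_sq hf hf1)⟩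
    have e := hJ h (X i) h0 (by simp)
    have e' : lbr n μ h (X i) = μ i • h - X i := by
      rw [lbr_eq, dmuD_X, h1, smul_eq_C_mul]; ring
    rw [e', map_sub, map_smul, ha, sub_eq_zero, smul_smul] at e
    rw [← e, mul_comm]
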